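/- arXiv:2301.00743 — 4 statements merged into one kernel-verified Lean document; each statement's English description precedes it below -/
import Mathlib

section
/- Let K be a field of characteristic different from 2 and Q = (α,β/K) a quaternion algebra over K. Suppose q = q₀ + q₁i + q₂j + q₃k ∈ Q is not a scalar (q ∉ K·1) and r = r₀ + r₁i + r₂j + r₃k ∈ Q satisfies r² = q. Then r₀ ≠ 0, the element d := 2r₀² − q₀ satisfies d² = N(q), r₀² = (q₀ + d)/2, and moreover r₁ = q₁/(2r₀), r₂ = q₂/(2r₀), r₃ = q₃/(2r₀). -/
open Quaternion

/-- Let `q ∈ (α,β/K)` be a non-scalar quaternion and `r` a square root of `q`. Then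
`r₀ ≠ 0`, the element `d := 2r₀² − q₀` satisfies `d² = N(q)`, `r₀² = (q₀ + d)/2` and
`r₁ = q₁/(2r₀)`, `r₂ = q₂/(2r₀)`, `r₃ = q₃/(2r₀)`. -/
theorem sqrt_of_noncentral_quaternion_form
    {K : Type*} [Field K] (hchar : (2 : K) ≠ 0) (α β : K) (hα : α ≠ 0) (hβ : β ≠ 0)
    (q r : ℍ[K, α, β]) (hq : q ∉ Set.range (algebraMap K ℍ[K, α, β]))
    (hr : r ^ 2 = q) :
    r.re ≠ 0 ∧
    (2 * r.re ^ 2 - q.re) ^ 2 =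
      q.re ^ 2 - α * q.imI ^ 2 - β * q.imJ ^ 2 + α * β * q.imK ^ 2 ∧
    r.re ^ 2 = (q.re + (2 * r.re ^ 2 - q.re)) / 2 ∧
    r.imI = q.imI / (2 * r.re) ∧
    r.imJ = q.imJ / (2 * r.re) ∧
    r.imK = q.imK / (2 * r.re) := by
  have h0 : q.re = r.re ^ 2 + α * r.imI ^ 2 + β * r.imJ ^ 2 - α * β * r.imK ^ 2 := by
    rw [← hr, pow_two, QuaternionAlgebra.re_mul]; ring
  have h1 : q.imI = 2 * r.re * r.imI := by
    rw [← hr, pow_two, QuaternionAlgebra.imI_mul]; ring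
  have h2 : q.imJ = 2 * r.re * r.imJ := by
    rw [← hr, pow_two, QuaternionAlgebra.imJ_mul]; ring
  have h3 : q.imK = 2 * r.re * r.imK := by
    rw [← hr, pow_two, QuaternionAlgebra.imK_mul]; ring
  have hre : r.re ≠ 0 := by
    intro h
    apply hq
    refine ⟨q.re, ?_⟩
    rw [QuaternionAlgebra.algebraMap_eq]
    ext <;> simp [h1, h2, h3, h]
  refine ⟨hre, ?_, ?_, ?_, ?_, ?_⟩
  · rw [h0, h1, h2, h3]; ring
  · field_simp; ring
  · rw [h1]; field_simp
  · rw [h2]; field_simp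
  · rw [h3]; field_simp
end

section
/- Let K be a field of characteristic different from 2 and Q = (α,β/K) a quaternion algebra over K. Let q = q₀ + q₁i + q₂j + q₃k ∈ Q and let d ∈ K satisfy d² = N(q). If r₀ ∈ K is nonzero and r₀² = (q₀ + d)/2, then the quaternion r = r₀ + (q₁/(2r₀))·i + (q₂/(2r₀))·j + (q₃/(2r₀))·k satisfies r² = q. -/
open Quaternion

/-- Let `q ∈ (α,β/K)` and `d ∈ K` with `d² = N(q)`. If `r₀ ≠ 0` and `r₀² = (q₀ + d)/2`,
then `r = r₀ + (q₁/(2r₀))i + (q₂/(2r₀))j + (q₃/(2r₀))k` satisfies `r² = q`. -/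
theorem sqrt_of_noncentral_quaternion_correct
    {K : Type*} [Field K] (hchar : (2 : K) ≠ 0) (α β : K) (hα : α ≠ 0) (hβ : β ≠ 0)
    (q : ℍ[K, α, β]) (d : K)
    (hd : d ^ 2 = q.re ^ 2 - α * q.imI ^ 2 - β * q.imJ ^ 2 + α * β * q.imK ^ 2)
    (r₀ : K) (hr₀ : r₀ ≠ 0) (hsq : r₀ ^ 2 = (q.re + d) / 2) :
    (⟨r₀, q.imI / (2 * r₀), q.imJ / (2 * r₀), q.imK / (2 * r₀)⟩ : ℍ[K, α, β]) ^ 2 = q := by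
  have h2 : 2 * r₀ ^ 2 = q.re + d := by
    rw [hsq]; field_simp
  rw [pow_two]
  ext
  · rw [QuaternionAlgebra.re_mul]
    have key : r₀ * r₀ + (α * q.imI ^ 2 + β * q.imJ ^ 2 - α * β * q.imK ^ 2) / (2 * r₀) ^ 2
        = q.re := by
      have h4 : (2 * r₀) ^ 2 ≠ 0 := pow_ne_zero _ (mul_ne_zero hchar hr₀)
      rw [← eq_sub_iff_add_eq', div_eq_iff h4]
      linear_combination (2 * r₀ ^ 2 - q.re + d) * h2 + hd
    rw [← key]
    field_simp
    ring
  · rw [QuaternionAlgebra.imI_mul]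
    field_simp
    ring
  · rw [QuaternionAlgebra.imJ_mul]
    field_simp
    ring
  · rw [QuaternionAlgebra.imK_mul]
    field_simp
    ring
end

section
/- Let K be a field of characteristic different from 2, let α, β ∈ K be nonzero, and let a ∈ K be nonzero with aα not a square in K. Then a is the square of a pure quaternion in the quaternion algebra (α,β/K) if and only if there exists a nonzero d ∈ K represented by both binary quadratic forms ⟨a, −α⟩ and ⟨β, −αβ⟩, i.e., d = ax² − αy² and d = βu² − αβv² for some x, y, u, v ∈ K. -/
open Quaternion

/-- Let `K` have characteristic ≠ 2, let `α, β, a ∈ K` be nonzero with `aα` not a square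
in `K`. Then `a` is the square of a pure quaternion in `(α,β/K)` if and only if some
nonzero `d ∈ K` is represented by both binary forms `⟨a, −α⟩` and `⟨β, −αβ⟩`. -/
theorem central_square_iff_common_value
    {K : Type*} [Field K] (hchar : (2 : K) ≠ 0) (α β a : K)
    (hα : α ≠ 0) (hβ : β ≠ 0) (ha : a ≠ 0) (hns : ¬∃ c : K, a * α = c ^ 2) :
    (∃ q₁ q₂ q₃ : K,
        (⟨0, q₁, q₂, q₃⟩ : ℍ[K, α, β]) ^ 2 = algebraMap K ℍ[K, α, β] a) ↔
      ∃ d : K, d ≠ 0 ∧ (∃ x y : K, d = a * x ^ 2 - α * y ^ 2) ∧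
        (∃ u v : K, d = β * u ^ 2 - α * β * v ^ 2) := by
  have key : ∀ q₁ q₂ q₃ : K,
      (⟨0, q₁, q₂, q₃⟩ : ℍ[K, α, β]) ^ 2 = algebraMap K ℍ[K, α, β] a ↔
        α * q₁ ^ 2 + β * q₂ ^ 2 - α * β * q₃ ^ 2 = a := by
    intro q₁ q₂ q₃
    rw [pow_two, QuaternionAlgebra.mk_mul_mk, QuaternionAlgebra.algebraMap_eq,
      QuaternionAlgebra.mk.injEq]
    constructor
    · rintro ⟨h, -⟩
      linear_combination h
    · intro h
      refine ⟨?_, ?_, ?_, ?_⟩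
      · linear_combination h
      all_goals ring
  simp only [key]
  constructor
  · rintro ⟨q₁, q₂, q₃, h⟩
    refine ⟨a - α * q₁ ^ 2, ?_, ⟨1, q₁, by ring⟩, ⟨q₂, q₃, by linear_combination -h⟩⟩
    intro h0
    exact hns ⟨α * q₁, by linear_combination α * h0⟩
  · rintro ⟨d, hd, ⟨x, y, h1⟩, ⟨u, v, h2⟩⟩
    by_cases hx : x = 0
    · subst hx
      have hy : y ≠ 0 := by
        rintro rfl
        exact hd (by rw [h1]; ring)
      obtain ⟨t, ht⟩ : ∃ t : K, t * (2 * α * y) = a - α :=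
        ⟨(a - α) / (2 * α * y), div_mul_cancel₀ _ (by simp [hchar, hα, hy])⟩
      exact ⟨t * y + 1, t * u, t * v, by linear_combination ht + t ^ 2 * (h1 - h2)⟩
    · refine ⟨y / x, u / x, v / x, ?_⟩
      field_simp
      linear_combination h1 - h2
end

section
/- Let K be a field, let α, β, a ∈ K be nonzero, and let l₀, l₁, m₀, m₁ ∈ K with m₀ ≠ 0. If a·(m₀² − aα·m₁²) = β·(l₀² − α·l₁²), then the pure quaternion q = (a·m₁/m₀)·i + (l₀/m₀)·j + (l₁/m₀)·k in the quaternion algebra (α,β/K) satisfies q² = a. -/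
open Quaternion

/-- If `a·(m₀² − aα·m₁²) = β·(l₀² − α·l₁²)` with `m₀ ≠ 0`, then the pure quaternion
`q = (a·m₁/m₀)·i + (l₀/m₀)·j + (l₁/m₀)·k` in `(α,β/K)` satisfies `q² = a`. -/
theorem sqrt_of_central_from_two_norm_equations
    {K : Type*} [Field K] (α β a : K) (hα : α ≠ 0) (hβ : β ≠ 0) (ha : a ≠ 0)
    (l₀ l₁ m₀ m₁ : K) (hm₀ : m₀ ≠ 0)
    (h : a * (m₀ ^ 2 - a * α * m₁ ^ 2) = β * (l₀ ^ 2 - α * l₁ ^ 2)) :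
    (⟨0, a * m₁ / m₀, l₀ / m₀, l₁ / m₀⟩ : ℍ[K, α, β]) ^ 2 =
      algebraMap K ℍ[K, α, β] a := by
  rw [pow_two, QuaternionAlgebra.mk_mul_mk, QuaternionAlgebra.coe_algebraMap]
  ext
  · simp only [QuaternionAlgebra.re_coe]
    field_simp
    linear_combination -h
  · simp only [QuaternionAlgebra.imI_coe]
    ring
  · simp only [QuaternionAlgebra.imJ_coe]
    ring
  · simp only [QuaternionAlgebra.imK_coe]
    ring
end
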